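/- arXiv:2407.13762 — 2 statements merged into one kernel-verified Lean document; each statement's English description precedes it below -/
import Mathlib

section
/- Fix a > 0, κ ≥ 0 and t > 0. For every continuous θ : [0,t] → 𝒳ₙ the following hold: (i) Φ^{κ,a}_t(θ) = a·log( F(θ_t)/F(θ_0) ) + a·κ·n(n²−1)·t/24 + (2(κ−a)/a)·∫₀ᵗ Σ_{j=1}ⁿ φ_a^j(θ_s)² ds; (ii) Φ^{0,a}_t(θ) ≤ G_a(θ_0); (iii) Φ^{κ,a}_t(θ) = Φ^{0,a}_t(θ) + (κ/2)∫₀ᵗ ψ_a(θ_s) ds, which decreases monotonically to Φ^{0,a}_t(θ) as κ ↓ 0. -/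
/-!
Everything rests on the pointwise identity `ψ = ∑ⱼ (φʲ)² + n(n² - 1)/3`. Expand the squares and
average over cyclic rotations of the indices: since `cot α cot β + cot β cot γ + cot γ cot α = 1`
for `α + β + γ = 0`, the products of cotangents at three distinct points contribute a constant, and
the remaining diagonal terms are `cot² = csc² - 1`. Integrating along the path expresses `∫ ψ_a`
through `∫ ∑ⱼ (φ_aʲ)²`. Apart from this, `Φ^{κ,a}` is affine in `κ` with slope `½ ∫ ψ_a ≥ 0`, and
`G_a ≥ 0` because `0 ≤ F ≤ 1`.
-/

open MeasureTheory Filter Set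
open scoped Real Topology ENNReal Classical

noncomputable section

/-- The configuration space `𝒳ₙ` of `n` ordered points on (a lift of) the circle:
`θ¹ < θ² < ⋯ < θⁿ < θ¹ + 2π`. -/
def Xspace (n : ℕ) : Set (Fin n → ℝ) :=
  {x | StrictMono x ∧ ∀ i j : Fin n, x i < x j + 2 * π}

/-- The value `θ^{j+1}`, with the convention `θ^{n+1} = θ¹ + 2π`. -/
def nextVal {n : ℕ} (x : Fin n → ℝ) (j : Fin n) : ℝ :=
  if h : (j : ℕ) + 1 < n then x ⟨(j : ℕ) + 1, h⟩ else x ⟨0, j.pos⟩ + 2 * π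

/-- The gap `θ^{j+1} - θ^j` (with wrap-around convention). -/
def gap {n : ℕ} (x : Fin n → ℝ) (j : Fin n) : ℝ := nextVal x j - x j

/-- The minimal gap `Δ(θ) = min_j (θ^{j+1} - θ^j)`. -/
def minGap {n : ℕ} (x : Fin n → ℝ) : ℝ := ⨅ j : Fin n, gap x j

/-- `d(θ) := max_j |2π/n - (θ^{j+1} - θ^j)|`. -/
def dGap {n : ℕ} (x : Fin n → ℝ) : ℝ := ⨆ j : Fin n, |2 * π / n - gap x j|

/-- `φ^j(θ) = ∑_{k ≠ j} cot((θ^j - θ^k)/2)`. -/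
def phi {n : ℕ} (x : Fin n → ℝ) (j : Fin n) : ℝ :=
  ∑ k ∈ Finset.univ.erase j, Real.cot ((x j - x k) / 2)

/-- `φ_a^j := (a/4) φ^j`. -/
def phiA {n : ℕ} (a : ℝ) (x : Fin n → ℝ) (j : Fin n) : ℝ := a / 4 * phi x j

/-- Absolute continuity of every coordinate of `θ` on `[0, T]`: each component is the
integral of a (locally) integrable function. -/
def AbsCont {n : ℕ} (T : ℝ) (θ : ℝ → Fin n → ℝ) : Prop :=
  ∃ v : ℝ → Fin n → ℝ, (∀ j, IntegrableOn (fun s => v s j) (Icc 0 T)) ∧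
    ∀ t ∈ Icc (0 : ℝ) T, ∀ j, θ t j = θ 0 j + ∫ s in (0 : ℝ)..t, v s j

/-- Truncated multiradial Dirichlet energy `J_T(θ)`. -/
def mEnergy (n : ℕ) (T : ℝ) (θ : ℝ → Fin n → ℝ) : ℝ≥0∞ :=
  if AbsCont T θ then
    ENNReal.ofReal (1 / 2) *
      ∫⁻ s in Ioc (0 : ℝ) T,
        ENNReal.ofReal (∑ j, (deriv (fun t => θ t j) s - 2 * phi (θ s) j) ^ 2)
  else ⊤

/-- Multiradial Dirichlet energy `J(θ) = lim_{T→∞} J_T(θ)`, the supremum of the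
nondecreasing family `J_T(θ)`. -/
def mEnergyInf (n : ℕ) (θ : ℝ → Fin n → ℝ) : ℝ≥0∞ := ⨆ T : ℝ, mEnergy n T θ

/-- Truncated multiradial Dirichlet energy with parameter `a`, `J^a_T(θ)`. -/
def mEnergyA (n : ℕ) (a T : ℝ) (θ : ℝ → Fin n → ℝ) : ℝ≥0∞ :=
  if AbsCont T θ then
    ENNReal.ofReal (1 / 2) *
      ∫⁻ s in Ioc (0 : ℝ) T,
        ENNReal.ofReal (∑ j, (deriv (fun t => θ t j) s - 2 * phiA a (θ s) j) ^ 2)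
  else ⊤

/-- `J^a(θ) = lim_{T→∞} J^a_T(θ)` (supremum of the nondecreasing family). -/
def mEnergyAInf (n : ℕ) (a : ℝ) (θ : ℝ → Fin n → ℝ) : ℝ≥0∞ := ⨆ T : ℝ, mEnergyA n a T θ

/-- Truncated Dirichlet energy `E_T(θ)`. -/
def dEnergy (n : ℕ) (T : ℝ) (θ : ℝ → Fin n → ℝ) : ℝ≥0∞ :=
  if AbsCont T θ then
    ENNReal.ofReal (1 / 2) *
      ∫⁻ s in Ioc (0 : ℝ) T, ENNReal.ofReal (∑ j, deriv (fun t => θ t j) s ^ 2)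
  else ⊤

/-- `E(θ) = lim_{T→∞} E_T(θ)` (supremum of the nondecreasing family). -/
def dEnergyInf (n : ℕ) (θ : ℝ → Fin n → ℝ) : ℝ≥0∞ := ⨆ T : ℝ, dEnergy n T θ

/-- `F(θ) := ∏_{j<k} |sin((θ^k - θ^j)/2)|`. -/
def Fprod {n : ℕ} (x : Fin n → ℝ) : ℝ :=
  ∏ j : Fin n, ∏ k ∈ Finset.univ.filter (fun k => j < k), |Real.sin ((x k - x j) / 2)|

/-- `G_a(θ) := -a log F(θ)`. -/
def Ga {n : ℕ} (a : ℝ) (x : Fin n → ℝ) : ℝ := -(a * Real.log (Fprod x))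

/-- `ψ(θ) := ∑_j ∑_{k≠j} csc²((θ^j - θ^k)/2)`. -/
def psi {n : ℕ} (x : Fin n → ℝ) : ℝ :=
  ∑ j : Fin n, ∑ k ∈ Finset.univ.erase j, (Real.sin ((x j - x k) / 2))⁻¹ ^ 2

/-- `ψ_a := (a/4) ψ`. -/
def psiA {n : ℕ} (a : ℝ) (x : Fin n → ℝ) : ℝ := a / 4 * psi x

/-- The radial interaction functional `Φ^{κ,a}_T(θ)`. -/
def PhiK {n : ℕ} (κ a T : ℝ) (θ : ℝ → Fin n → ℝ) : ℝ :=
  Ga a (θ 0) - Ga a (θ T) +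
    (1 / 2) * ∫ s in (0 : ℝ)..T, (κ * psiA a (θ s) - ∑ j, (2 * phiA a (θ s) j) ^ 2)

section CyclicSums

variable {ι R : Type*} [CommRing R] {c : ι → ι → R}

/-- The corrections on the right extend the relation for distinct indices to all triples, so that
it can be summed over `ι³`. -/
theorem cyclic_sum_mul_eq [DecidableEq ι] (hdiag : ∀ i, c i i = 0)
    (hanti : ∀ i j, c j i = -c i j)
    (hcyc : ∀ i j k, i ≠ j → j ≠ k → k ≠ i → c i j * c j k + c j k * c k i + c k i * c i j = 1)
    (i j k : ι) :
    c i j * c i k + c j k * c j i + c k i * c k j =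
      ((if j = k then c i j ^ 2 + 1 else 0) + (if k = i then c j k ^ 2 + 1 else 0) +
        if i = j then c k i ^ 2 + 1 else 0) - 1 -
      (if i = j then if j = k then 2 else 0 else 0) := by
  rcases eq_or_ne i j with rfl | hij
  · rcases eq_or_ne i k with rfl | hik
    · simp only [hdiag, if_true]
      ring
    · simp only [hik, hik.symm, if_true, if_false, hdiag]
      ring
  rcases eq_or_ne j k with rfl | hjk
  · simp only [hij, hij.symm, if_true, if_false, hdiag]
    ring
  rcases eq_or_ne k i with rfl | hki
  · simp only [hij, hjk, if_true, if_false, hdiag]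
    ring
  simp only [hij, hjk, hki, if_false, hanti k i, hanti i j, hanti j k]
  linear_combination -hcyc i j k hij hjk hki

variable [Fintype ι]

theorem sum_add_cyclic_rotations {M : Type*} [AddCommMonoid M] (f : ι → ι → ι → M) :
    ∑ i, ∑ j, ∑ k, (f i j k + f j k i + f k i j) = 3 • ∑ i, ∑ j, ∑ k, f i j k := by
  have hrot : ∑ i, ∑ j, ∑ k, f j k i = ∑ i, ∑ j, ∑ k, f i j k := Finset.sum_comm_cycle.symm
  have hrot' : ∑ i, ∑ j, ∑ k, f k i j = ∑ i, ∑ j, ∑ k, f i j k := Finset.sum_comm_cycle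
  simp only [Finset.sum_add_distrib, hrot, hrot']
  abel

theorem three_mul_sum_sq_sum_of_cyclic (hdiag : ∀ i, c i i = 0)
    (hanti : ∀ i j, c j i = -c i j)
    (hcyc : ∀ i j k, i ≠ j → j ≠ k → k ≠ i → c i j * c j k + c j k * c k i + c k i * c i j = 1) :
    3 * ∑ i, (∑ j, c i j) ^ 2 =
      3 * ∑ i, ∑ j, c i j ^ 2 -
        Fintype.card ι * (Fintype.card ι - 1) * (Fintype.card ι - 2) := by
  classical
  have hproducts : 3 * ∑ i, (∑ j, c i j) ^ 2 =
      ∑ i, ∑ j, ∑ k, (c i j * c i k + c j k * c j i + c k i * c k j) := by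
    rw [sum_add_cyclic_rotations fun i j k => c i j * c i k]
    simp only [sq, Finset.sum_mul_sum, nsmul_eq_mul, Nat.cast_ofNat]
  have hdiagonal : ∑ i, ∑ j, ∑ k, ((if j = k then c i j ^ 2 + 1 else 0) +
      (if k = i then c j k ^ 2 + 1 else 0) + if i = j then c k i ^ 2 + 1 else 0) =
      3 * (∑ i, ∑ j, c i j ^ 2 + Fintype.card ι * Fintype.card ι) := by
    rw [sum_add_cyclic_rotations fun i j k => if j = k then c i j ^ 2 + 1 else 0]
    simp [Finset.sum_add_distrib, mul_add]
  have htriples : ∑ _i : ι, ∑ _j : ι, ∑ _k : ι, (1 : R) = (Fintype.card ι : R) ^ 3 := by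
    simp [pow_succ, mul_assoc]
  have hcoincident : ∑ i : ι, ∑ j : ι, ∑ k : ι,
      (if i = j then if j = k then (2 : R) else 0 else 0) = 2 * Fintype.card ι := by
    simp [mul_comm]
  simp only [hproducts, cyclic_sum_mul_eq hdiag hanti hcyc, Finset.sum_sub_distrib, hdiagonal,
    htriples, hcoincident]
  ring

end CyclicSums

section Cotangent

theorem real_cot_zero : Real.cot 0 = 0 := by simp [Real.cot_eq_cos_div_sin]

theorem real_cot_neg (α : ℝ) : Real.cot (-α) = -Real.cot α := by
  simp [Real.cot_eq_cos_div_sin, div_neg]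

theorem inv_sin_sq_eq_cot_sq_add_one {α : ℝ} (hα : Real.sin α ≠ 0) :
    (Real.sin α)⁻¹ ^ 2 = Real.cot α ^ 2 + 1 := by
  rw [Real.cot_eq_cos_div_sin]
  field_simp
  exact (Real.cos_sq_add_sin_sq α).symm

theorem cot_mul_cot_add_cyclic_of_add_eq_zero {α β γ : ℝ} (hα : Real.sin α ≠ 0)
    (hβ : Real.sin β ≠ 0) (hγ : Real.sin γ ≠ 0) (hsum : α + β + γ = 0) :
    Real.cot α * Real.cot β + Real.cot β * Real.cot γ + Real.cot γ * Real.cot α = 1 := by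
  obtain rfl : γ = -(α + β) := by linear_combination hsum
  rw [Real.sin_neg, Real.sin_add, neg_ne_zero] at hγ
  simp only [Real.cot_eq_cos_div_sin, Real.sin_neg, Real.cos_neg, Real.sin_add, Real.cos_add]
  field_simp
  ring

theorem sin_half_sub_eq_zero_iff {α β : ℝ} :
    Real.sin ((α - β) / 2) = 0 ↔ (α : Real.Angle) = β := by
  rw [Real.sin_eq_zero_iff, Real.Angle.angle_eq_iff_two_pi_dvd_sub]
  exact exists_congr fun k => ⟨fun h => by linear_combination -2 * h,
    fun h => by linear_combination -h / 2⟩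

end Cotangent

section CollisionFree

/-- The configurations of pairwise distinct points on the circle `ℝ / 2πℤ`, given by arbitrary
lifts of the points to `ℝ`. In contrast to `Xspace`, neither the order of the points nor the choice
of the lifts is restricted. -/
def collisionFree (ι : Type*) : Set (ι → ℝ) :=
  {x | Function.Injective fun j => (x j : Real.Angle)}

theorem sin_half_sub_ne_zero_of_mem_collisionFree {ι : Type*} {x : ι → ℝ}
    (hx : x ∈ collisionFree ι) {j k : ι} (hjk : j ≠ k) : Real.sin ((x j - x k) / 2) ≠ 0 :=
  fun h => hjk (hx (sin_half_sub_eq_zero_iff.mp h))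

theorem Xspace_subset_collisionFree (n : ℕ) : Xspace n ⊆ collisionFree (Fin n) := by
  rintro x ⟨hmono, hlt⟩ j k hjk
  have hsin : Real.sin ((x j - x k) / 2) = 0 := sin_half_sub_eq_zero_iff.mpr hjk
  have hjk_lt := hlt j k
  have hkj_lt := hlt k j
  rw [Real.sin_eq_zero_iff_of_lt_of_lt (by linarith) (by linarith)] at hsin
  exact hmono.injective (by linarith)

theorem sum_sum_inv_sin_sq_eq_of_mem_collisionFree {ι : Type*} [Fintype ι] [DecidableEq ι]
    {x : ι → ℝ} (hx : x ∈ collisionFree ι) :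
    ∑ j, ∑ k ∈ Finset.univ.erase j, (Real.sin ((x j - x k) / 2))⁻¹ ^ 2 =
      ∑ j, (∑ k ∈ Finset.univ.erase j, Real.cot ((x j - x k) / 2)) ^ 2 +
        Fintype.card ι * ((Fintype.card ι : ℝ) ^ 2 - 1) / 3 := by
  have hdiag (j : ι) : Real.cot ((x j - x j) / 2) = 0 := by simp [real_cot_zero]
  have hanti (j k : ι) : Real.cot ((x k - x j) / 2) = -Real.cot ((x j - x k) / 2) := by
    rw [← real_cot_neg]
    ring_nf
  have hcyc := three_mul_sum_sq_sum_of_cyclic hdiag hanti fun j k l hjk hkl hlj =>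
    cot_mul_cot_add_cyclic_of_add_eq_zero (sin_half_sub_ne_zero_of_mem_collisionFree hx hjk)
      (sin_half_sub_ne_zero_of_mem_collisionFree hx hkl)
      (sin_half_sub_ne_zero_of_mem_collisionFree hx hlj) (by ring)
  have hcsc (j : ι) : ∑ k ∈ Finset.univ.erase j, (Real.sin ((x j - x k) / 2))⁻¹ ^ 2 =
      ∑ k, Real.cot ((x j - x k) / 2) ^ 2 + (Fintype.card ι - 1) := by
    rw [Finset.sum_congr rfl fun k hk => inv_sin_sq_eq_cot_sq_add_one
        (sin_half_sub_ne_zero_of_mem_collisionFree hx (Finset.ne_of_mem_erase hk).symm),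
      Finset.sum_add_distrib, Finset.sum_erase _ (by simp [real_cot_zero])]
    simp [Finset.card_erase_of_mem, Nat.cast_pred (Fintype.card_pos_iff.mpr ⟨j⟩)]
  have hcot (j : ι) : ∑ k ∈ Finset.univ.erase j, Real.cot ((x j - x k) / 2) =
      ∑ k, Real.cot ((x j - x k) / 2) := Finset.sum_erase _ (hdiag j)
  simp only [hcsc, hcot, Finset.sum_add_distrib, Finset.sum_const, Finset.card_univ, nsmul_eq_mul]
  linear_combination -hcyc / 3

end CollisionFree

section Configuration

variable {n : ℕ} {x : Fin n → ℝ} {a : ℝ}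

theorem psiA_eq_of_mem_collisionFree (ha : a ≠ 0) (hx : x ∈ collisionFree (Fin n)) :
    psiA a x = 4 / a * ∑ j, phiA a x j ^ 2 + a * ((n : ℝ) * ((n : ℝ) ^ 2 - 1)) / 12 := by
  have hpsi : psi x = ∑ j, phi x j ^ 2 + n * ((n : ℝ) ^ 2 - 1) / 3 := by
    simpa only [psi, phi, Fintype.card_fin] using sum_sum_inv_sin_sq_eq_of_mem_collisionFree hx
  simp only [psiA, phiA, hpsi, mul_pow, ← Finset.mul_sum]
  field_simp
  ring

theorem psiA_nonneg (ha : 0 ≤ a) (x : Fin n → ℝ) : 0 ≤ psiA a x := by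
  unfold psiA psi
  positivity

theorem Fprod_nonneg (x : Fin n → ℝ) : 0 ≤ Fprod x := by
  unfold Fprod
  positivity

theorem Fprod_le_one (x : Fin n → ℝ) : Fprod x ≤ 1 :=
  Finset.prod_le_one (fun _ _ => by positivity) fun _ _ =>
    Finset.prod_le_one (fun _ _ => abs_nonneg _) fun _ _ => Real.abs_sin_le_one _

theorem Fprod_ne_zero_of_mem_collisionFree (hx : x ∈ collisionFree (Fin n)) : Fprod x ≠ 0 :=
  Finset.prod_ne_zero_iff.mpr fun _ _ => Finset.prod_ne_zero_iff.mpr fun _ hk =>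
    abs_ne_zero.mpr
      (sin_half_sub_ne_zero_of_mem_collisionFree hx (Finset.mem_filter.mp hk).2.ne')

theorem Ga_nonneg (ha : 0 ≤ a) (x : Fin n → ℝ) : 0 ≤ Ga a x :=
  neg_nonneg.mpr <| mul_nonpos_of_nonneg_of_nonpos ha <|
    Real.log_nonpos (Fprod_nonneg x) (Fprod_le_one x)

theorem Ga_sub_Ga {y : Fin n → ℝ} (a : ℝ) (hx : x ∈ collisionFree (Fin n))
    (hy : y ∈ collisionFree (Fin n)) :
    Ga a x - Ga a y = a * Real.log (Fprod y / Fprod x) := by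
  rw [Ga, Ga, Real.log_div (Fprod_ne_zero_of_mem_collisionFree hy)
    (Fprod_ne_zero_of_mem_collisionFree hx)]
  ring

theorem continuousOn_phiA (a : ℝ) (j : Fin n) :
    ContinuousOn (fun x => phiA a x j) (collisionFree (Fin n)) := by
  simp only [phiA, phi, Real.cot_eq_cos_div_sin]
  refine (continuousOn_finsetSum _ fun k hk => ?_).const_mul _
  exact ContinuousOn.div (by fun_prop) (by fun_prop) fun x hx =>
    sin_half_sub_ne_zero_of_mem_collisionFree hx (Finset.ne_of_mem_erase hk).symm

theorem continuousOn_psiA (a : ℝ) :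
    ContinuousOn (psiA a : (Fin n → ℝ) → ℝ) (collisionFree (Fin n)) := by
  refine (continuousOn_finsetSum _ fun j _ => continuousOn_finsetSum _ fun k hk => ?_).const_mul _
  exact (ContinuousOn.inv₀ (by fun_prop) fun x hx =>
    sin_half_sub_ne_zero_of_mem_collisionFree hx (Finset.ne_of_mem_erase hk).symm).pow 2

end Configuration

section Path

variable {n : ℕ} {t : ℝ} {θ : ℝ → Fin n → ℝ}

theorem intervalIntegrable_psiA (a : ℝ) (hcont : ContinuousOn θ (uIcc 0 t))
    (hθ : MapsTo θ (uIcc 0 t) (collisionFree (Fin n))) :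
    IntervalIntegrable (fun s => psiA a (θ s)) volume 0 t :=
  ((continuousOn_psiA a).comp hcont hθ).intervalIntegrable

theorem intervalIntegrable_sum_phiA_sq (a : ℝ) (hcont : ContinuousOn θ (uIcc 0 t))
    (hθ : MapsTo θ (uIcc 0 t) (collisionFree (Fin n))) :
    IntervalIntegrable (fun s => ∑ j, phiA a (θ s) j ^ 2) volume 0 t :=
  (continuousOn_finsetSum _ fun j _ =>
    ((continuousOn_phiA a j).comp hcont hθ).pow 2).intervalIntegrable

theorem PhiK_eq_integral_psiA_sub_integral_phiA (κ a : ℝ) (hcont : ContinuousOn θ (uIcc 0 t))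
    (hθ : MapsTo θ (uIcc 0 t) (collisionFree (Fin n))) :
    PhiK κ a t θ = Ga a (θ 0) - Ga a (θ t) + κ / 2 * (∫ s in (0 : ℝ)..t, psiA a (θ s)) -
      2 * ∫ s in (0 : ℝ)..t, ∑ j, phiA a (θ s) j ^ 2 := by
  simp only [PhiK, mul_pow, ← Finset.mul_sum]
  rw [intervalIntegral.integral_sub ((intervalIntegrable_psiA a hcont hθ).const_mul κ)
      ((intervalIntegrable_sum_phiA_sq a hcont hθ).const_mul _),
    intervalIntegral.integral_const_mul, intervalIntegral.integral_const_mul]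
  ring

theorem integral_psiA_eq {a : ℝ} (ha : a ≠ 0) (hcont : ContinuousOn θ (uIcc 0 t))
    (hθ : MapsTo θ (uIcc 0 t) (collisionFree (Fin n))) :
    ∫ s in (0 : ℝ)..t, psiA a (θ s) =
      4 / a * (∫ s in (0 : ℝ)..t, ∑ j, phiA a (θ s) j ^ 2) +
        a * ((n : ℝ) * ((n : ℝ) ^ 2 - 1)) * t / 12 := by
  rw [intervalIntegral.integral_congr fun s hs => psiA_eq_of_mem_collisionFree ha (hθ hs),
    intervalIntegral.integral_add ((intervalIntegrable_sum_phiA_sq a hcont hθ).const_mul _)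
      intervalIntegrable_const,
    intervalIntegral.integral_const_mul, intervalIntegral.integral_const, smul_eq_mul]
  ring

end Path

theorem Phi_identities_general {n : ℕ} {a t : ℝ} (κ : ℝ) (ha : 0 < a) (ht : 0 ≤ t)
    {θ : ℝ → Fin n → ℝ} (hcont : ContinuousOn θ (Icc 0 t))
    (hθ : MapsTo θ (Icc 0 t) (collisionFree (Fin n))) :
    PhiK κ a t θ =
        a * Real.log (Fprod (θ t) / Fprod (θ 0)) +
          a * κ * ((n : ℝ) * ((n : ℝ) ^ 2 - 1)) * t / 24 +
          2 * (κ - a) / a * ∫ s in (0 : ℝ)..t, ∑ j, phiA a (θ s) j ^ 2 ∧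
    PhiK 0 a t θ ≤ Ga a (θ 0) ∧
    PhiK κ a t θ = PhiK 0 a t θ + κ / 2 * ∫ s in (0 : ℝ)..t, psiA a (θ s) ∧
    Monotone (fun κ' => PhiK κ' a t θ) ∧
    Continuous (fun κ' => PhiK κ' a t θ) := by
  rw [← uIcc_of_le ht] at hcont hθ
  have hPhi (κ' : ℝ) := PhiK_eq_integral_psiA_sub_integral_phiA κ' a hcont hθ
  have hpsi : 0 ≤ ∫ s in (0 : ℝ)..t, psiA a (θ s) :=
    intervalIntegral.integral_nonneg ht fun _ _ => psiA_nonneg ha.le _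
  have hphi : 0 ≤ ∫ s in (0 : ℝ)..t, ∑ j, phiA a (θ s) j ^ 2 :=
    intervalIntegral.integral_nonneg ht fun _ _ => by positivity
  simp only [hPhi]
  refine ⟨?_, ?_, by ring, fun κ₁ κ₂ hle => by dsimp only; gcongr, by fun_prop⟩
  · rw [Ga_sub_Ga a (hθ left_mem_uIcc) (hθ right_mem_uIcc), integral_psiA_eq ha.ne' hcont hθ]
    field_simp
    ring
  · linarith [Ga_nonneg ha.le (θ t)]

/-- Identities and bounds for the radial interaction functional:
(i) the explicit identity for `Φ^{κ,a}_t`;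
(ii) `Φ^{0,a}_t(θ) ≤ G_a(θ_0)`;
(iii) `Φ^{κ,a}_t = Φ^{0,a}_t + (κ/2)∫₀ᵗ ψ_a(θ_s) ds`, which is monotone in `κ` and
decreases to `Φ^{0,a}_t(θ)` as `κ ↓ 0`. -/
theorem Phi_identities
    (n : ℕ) (hn : 1 ≤ n) (a κ t : ℝ) (ha : 0 < a) (hκ : 0 ≤ κ) (ht : 0 < t)
    (θ : ℝ → Fin n → ℝ)
    (hcont : ContinuousOn θ (Icc 0 t))
    (hX : ∀ s ∈ Icc (0 : ℝ) t, θ s ∈ Xspace n) :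
    PhiK κ a t θ =
        a * Real.log (Fprod (θ t) / Fprod (θ 0)) +
          a * κ * ((n : ℝ) * ((n : ℝ) ^ 2 - 1)) * t / 24 +
          2 * (κ - a) / a * ∫ s in (0 : ℝ)..t, ∑ j, phiA a (θ s) j ^ 2 ∧
    PhiK 0 a t θ ≤ Ga a (θ 0) ∧
    PhiK κ a t θ = PhiK 0 a t θ + κ / 2 * ∫ s in (0 : ℝ)..t, psiA a (θ s) ∧
    (∀ κ₁ κ₂ : ℝ, 0 ≤ κ₁ → κ₁ ≤ κ₂ → PhiK κ₁ a t θ ≤ PhiK κ₂ a t θ) ∧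
    Tendsto (fun κ' => PhiK κ' a t θ) (𝓝[>] (0 : ℝ)) (𝓝 (PhiK 0 a t θ)) := by
  obtain ⟨hformula, hle, haffine, hmono, hκ_cont⟩ := Phi_identities_general κ ha ht.le hcont
    fun s hs => Xspace_subset_collisionFree n (hX s hs)
  exact ⟨hformula, hle, haffine, fun _ _ _ h => hmono h,
    (hκ_cont.tendsto 0).mono_left nhdsWithin_le_nhds⟩

end
end

section
/- Derivative estimate for the finite-energy radial Loewner flow (n = 1). Fix T > 0, a weight λ : [0,T] → (0,∞) with L := sup_{s∈[0,T]} 1/λ_s < ∞, and an absolutely continuous θ : [0,T] → ℝ with E_T(θ) < ∞. Fix t ∈ [0,T] and y > 0, and set ℓ_s := λ_{t−s} and ϱ_s := θ_t − θ_{t−s} for s ∈ [0,t]. Suppose X, Y, u : [0,t] → ℝ are absolutely continuous with X_0 = 0, Y_0 = y, u_0 = 0, Y_s > 0 for all s, satisfying almost everywhere the (backward radial Loewner) system X'_s = ϱ'_s − ℓ_s·sin(X_s)/(cosh(Y_s) − cos(X_s)), Y'_s = ℓ_s·sinh(Y_s)/(cosh(Y_s) − cos(X_s)), u'_s = ℓ_s·(1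 − cos(X_s)·cosh(Y_s))/(cosh(Y_s) − cos(X_s))². (Here X_s + iY_s tracks the backward flow started at θ_t + iy and u_t = log|f_t'(θ_t + iy)| for the inverse Loewner map f_t.) Then u_t ≤ (1/4)·∫₀ᵗ (dθ_s/ds)²/λ_s ds ≤ (1/2)·L·E_T(θ). -/
open MeasureTheory Filter Set
open scoped Real Topology ENNReal Classical

noncomputable section

/-- Absolute continuity of a scalar function on `[0,T]`: it is the integral of a
(locally) integrable function. -/
def AbsCont1 (T : ℝ) (f : ℝ → ℝ) : Prop :=
  ∃ v : ℝ → ℝ, IntegrableOn v (Icc 0 T) ∧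
    ∀ t ∈ Icc (0 : ℝ) T, f t = f 0 + ∫ s in (0 : ℝ)..t, v s

/-- Dirichlet energy of a scalar function on `[0,T]`. -/
def dEnergy1 (T : ℝ) (f : ℝ → ℝ) : ℝ≥0∞ :=
  if AbsCont1 T f then
    ENNReal.ofReal (1 / 2) * ∫⁻ s in Ioc (0 : ℝ) T, ENNReal.ofReal (deriv f s ^ 2)
  else ⊤

/-!
Let `P = sinh y / (cosh y - cos x)` and `Q = sin x / (cosh y - cos x)` be the `2π`-periodic Poisson
kernel of the half-plane and its harmonic conjugate, so that the flow reads `X' = v - ℓ Q`,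
`Y' = ℓ P`, `u' = ℓ ∂_y P`, where `v` is the speed of the driver. Since `∂_x P = -P Q`, the terms in
`∂_y P` cancel in `(u - log P)' = Q v - ℓ Q²`, and completing the square bounds this rate by
`v² / (4 ℓ)`. The boundary terms have the right sign: `Y` increases, `P(x, ·) ≤ P(0, ·)`, and
`P(0, y) = coth (y / 2)` decreases in `y`.
-/

section AbsoluteContinuity

variable {a b : ℝ}

theorem absolutelyContinuousOnInterval_comp_of_lipschitzOnWith {E F : Type*} [PseudoMetricSpace E]
    [PseudoMetricSpace F] {f : ℝ → E} {g : E → F} {K : NNReal}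
    (hg : LipschitzOnWith K g (f '' uIcc a b)) (hf : AbsolutelyContinuousOnInterval f a b) :
    AbsolutelyContinuousOnInterval (fun x => g (f x)) a b := by
  refine squeeze_zero' (.of_forall fun _ => Finset.sum_nonneg fun _ _ => dist_nonneg) ?_
    (by simpa only [mul_zero] using Tendsto.const_mul (K : ℝ) hf)
  filter_upwards [mem_inf_of_right (mem_principal_self _)] with E hE
  rw [Finset.mul_sum]
  exact Finset.sum_le_sum fun i hi => hg.dist_le_mul _ (mem_image_of_mem f (hE.1 i hi).1) _
    (mem_image_of_mem f (hE.1 i hi).2)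

theorem absolutelyContinuousOnInterval_prodMk {E F : Type*} [PseudoMetricSpace E]
    [PseudoMetricSpace F] {f : ℝ → E} {g : ℝ → F} (hf : AbsolutelyContinuousOnInterval f a b)
    (hg : AbsolutelyContinuousOnInterval g a b) :
    AbsolutelyContinuousOnInterval (fun x => (f x, g x)) a b := by
  refine squeeze_zero (fun _ => Finset.sum_nonneg fun _ _ => dist_nonneg) (fun I => ?_)
    (by simpa only [add_zero] using Tendsto.add hf hg)
  rw [← Finset.sum_add_distrib]
  exact Finset.sum_le_sum fun i _ => max_le_add_of_nonneg dist_nonneg dist_nonneg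

theorem absolutelyContinuousOnInterval_comp_of_contDiffAt {E F : Type*} [NormedAddCommGroup E]
    [NormedSpace ℝ E] [NormedAddCommGroup F] [NormedSpace ℝ F] {f : ℝ → E} {g : E → F}
    (hg : ∀ x ∈ uIcc a b, ContDiffAt ℝ 1 g (f x)) (hf : AbsolutelyContinuousOnInterval f a b) :
    AbsolutelyContinuousOnInterval (fun x => g (f x)) a b := by
  have hloc : LocallyLipschitzOn (f '' uIcc a b) g := by
    rintro _ ⟨x, hx, rfl⟩
    obtain ⟨K, s, hs, hK⟩ := (hg x hx).exists_lipschitzOnWith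
    exact ⟨K, s, mem_nhdsWithin_of_mem_nhds hs, hK⟩
  obtain ⟨K, hK⟩ := hloc.exists_lipschitzOnWith_of_compact
    (isCompact_uIcc.image_of_continuousOn hf.continuousOn)
  exact absolutelyContinuousOnInterval_comp_of_lipschitzOnWith hK hf

theorem ae_restrict_differentiableAt_of_absolutelyContinuousOnInterval {f : ℝ → ℝ} (hab : a ≤ b)
    (hf : AbsolutelyContinuousOnInterval f a b) :
    ∀ᵐ x ∂volume.restrict (Icc a b), DifferentiableAt ℝ f x := by
  rw [ae_restrict_iff' measurableSet_Icc, ← uIcc_of_le hab]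
  exact hf.ae_differentiableAt

theorem AbsCont1.absolutelyContinuousOnInterval {T : ℝ} {f : ℝ → ℝ} (hT : 0 ≤ T)
    (hf : AbsCont1 T f) : AbsolutelyContinuousOnInterval f 0 T := by
  obtain ⟨v, hv, hfv⟩ := hf
  have hprim := ((intervalIntegrable_iff_integrableOn_Icc_of_le hT).2
    hv).absolutelyContinuousOnInterval_intervalIntegral (c := 0) left_mem_uIcc
  refine hprim.congr' ?_
  filter_upwards [mem_inf_of_right (mem_principal_self _)] with E hE
  refine Finset.sum_congr rfl fun i hi => ?_
  have hmem := hE.1 i hi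
  rw [uIcc_of_le hT] at hmem
  rw [hfv _ hmem.1, hfv _ hmem.2, dist_add_left]

end AbsoluteContinuity

section WeightedIntegral

variable {α : Type*} [MeasurableSpace α] {μ : Measure α} {g w : α → ℝ} {L : ℝ}

theorem integrable_div_of_one_div_le (hg : Integrable g μ) (hw : AEMeasurable w μ)
    (hw0 : ∀ᵐ x ∂μ, 0 < w x) (hL : ∀ᵐ x ∂μ, 1 / w x ≤ L) : Integrable (fun x => g x / w x) μ := by
  simp only [div_eq_mul_inv]
  refine hg.mul_bdd (c := L) hw.inv.aestronglyMeasurable ?_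
  filter_upwards [hw0, hL] with x hpos hle
  rwa [Real.norm_of_nonneg (inv_nonneg.2 hpos.le), inv_eq_one_div]

theorem integral_div_le_mul_integral (hg0 : 0 ≤ᵐ[μ] g) (hg : Integrable g μ)
    (hw0 : ∀ᵐ x ∂μ, 0 < w x) (hL : ∀ᵐ x ∂μ, 1 / w x ≤ L) :
    ∫ x, g x / w x ∂μ ≤ L * ∫ x, g x ∂μ := by
  rw [← integral_const_mul]
  refine integral_mono_of_nonneg ?_ (hg.const_mul L) ?_
  · filter_upwards [hg0, hw0] with x hgx hpos using div_nonneg hgx hpos.le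
  · filter_upwards [hg0, hL] with x hgx hle
    calc g x / w x = 1 / w x * g x := by ring
      _ ≤ L * g x := mul_le_mul_of_nonneg_right hle hgx

end WeightedIntegral

section Energy

variable {T : ℝ} {f : ℝ → ℝ}

theorem absCont1_of_dEnergy1_ne_top (hE : dEnergy1 T f ≠ ⊤) : AbsCont1 T f :=
  by_contra fun hf => hE (if_neg hf)

theorem integrableOn_deriv_sq_of_dEnergy1_ne_top (hE : dEnergy1 T f ≠ ⊤) :
    IntegrableOn (fun s => deriv f s ^ 2) (Ioc 0 T) := by
  rw [dEnergy1, if_pos (absCont1_of_dEnergy1_ne_top hE)] at hE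
  refine (lintegral_ofReal_ne_top_iff_integrable
    ((measurable_deriv f).pow_const 2).aestronglyMeasurable (ae_of_all _ fun _ => sq_nonneg _)).1
    fun h => hE ?_
  rw [h, ENNReal.mul_top (by norm_num)]

theorem AbsCont1.toReal_dEnergy1 (hf : AbsCont1 T f) :
    (dEnergy1 T f).toReal = 1 / 2 * ∫ s in Ioc 0 T, deriv f s ^ 2 := by
  rw [dEnergy1, if_pos hf, ENNReal.toReal_mul, ENNReal.toReal_ofReal (by norm_num),
    integral_eq_lintegral_of_nonneg_ae (ae_of_all _ fun _ => sq_nonneg _)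
      ((measurable_deriv f).pow_const 2).aestronglyMeasurable]

theorem integral_deriv_sq_div_le_dEnergy1 {w : ℝ → ℝ} {t L : ℝ} (h0t : 0 ≤ t) (htT : t ≤ T)
    (hE : dEnergy1 T f ≠ ⊤) (hL0 : 0 ≤ L) (hw0 : ∀ᵐ s ∂volume.restrict (Ioc 0 t), 0 < w s)
    (hL : ∀ᵐ s ∂volume.restrict (Ioc 0 t), 1 / w s ≤ L) :
    ∫ s in (0 : ℝ)..t, deriv f s ^ 2 / w s ≤ 2 * L * (dEnergy1 T f).toReal := by
  have hsub : Ioc 0 t ⊆ Ioc 0 T := Ioc_subset_Ioc_right htT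
  have hsq := integrableOn_deriv_sq_of_dEnergy1_ne_top hE
  calc ∫ s in (0 : ℝ)..t, deriv f s ^ 2 / w s
      ≤ L * ∫ s in Ioc 0 t, deriv f s ^ 2 := by
        rw [intervalIntegral.integral_of_le h0t]
        exact integral_div_le_mul_integral (ae_of_all _ fun _ => sq_nonneg _)
          (hsq.mono_set hsub) hw0 hL
    _ ≤ L * ∫ s in Ioc 0 T, deriv f s ^ 2 :=
        mul_le_mul_of_nonneg_left
          (setIntegral_mono_set hsq (ae_of_all _ fun _ => sq_nonneg _) hsub.eventuallyLE) hL0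
    _ = 2 * L * (dEnergy1 T f).toReal := by
        rw [(absCont1_of_dEnergy1_ne_top hE).toReal_dEnergy1]
        ring

end Energy

section PoissonKernel

/-- The `2π`-periodic Poisson kernel of the upper half-plane with pole at `0`, evaluated at
`x + i y` and normalized to tend to `1` as `y → ∞`; it is `-Im (cot ((x + i y) / 2))`. Its
logarithm is the function subtracted from `u` to obtain a quantity with bounded growth rate. -/
def periodicPoissonKernel (x y : ℝ) : ℝ :=
  Real.sinh y / (Real.cosh y - Real.cos x)

/-- The harmonic conjugate `Re (cot ((x + i y) / 2))` of `periodicPoissonKernel`, which drives the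
real part of the backward flow. -/
def periodicConjPoissonKernel (x y : ℝ) : ℝ :=
  Real.sin x / (Real.cosh y - Real.cos x)

variable {x y : ℝ}

theorem cosh_sub_cos_pos (hy : y ≠ 0) (x : ℝ) : 0 < Real.cosh y - Real.cos x :=
  sub_pos.2 ((Real.cos_le_one x).trans_lt (Real.one_lt_cosh.2 hy))

theorem periodicPoissonKernel_pos (hy : 0 < y) (x : ℝ) : 0 < periodicPoissonKernel x y :=
  div_pos (Real.sinh_pos_iff.2 hy) (cosh_sub_cos_pos hy.ne' x)

theorem periodicPoissonKernel_le_zero_left (hy : 0 < y) (x : ℝ) :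
    periodicPoissonKernel x y ≤ periodicPoissonKernel 0 y := by
  have hcos : Real.cos x ≤ Real.cos 0 := Real.cos_zero ▸ Real.cos_le_one x
  exact div_le_div_of_nonneg_left (Real.sinh_nonneg_iff.2 hy.le) (cosh_sub_cos_pos hy.ne' 0)
    (sub_le_sub_left hcos _)

theorem periodicPoissonKernel_zero_left (hy : y ≠ 0) :
    periodicPoissonKernel 0 y = 1 + 2 / (Real.exp y - 1) := by
  have hexp : Real.exp y - 1 ≠ 0 := sub_ne_zero.2 (Real.exp_eq_one_iff y |>.not.2 hy)
  have hden := (cosh_sub_cos_pos hy 0).ne'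
  rw [periodicPoissonKernel, div_eq_iff hden, Real.cos_zero, Real.sinh_eq, Real.cosh_eq,
    Real.exp_neg]
  field_simp
  ring

theorem antitoneOn_periodicPoissonKernel_zero_left :
    AntitoneOn (periodicPoissonKernel 0) (Ioi 0) := by
  intro y (hy : 0 < y) z (hz : 0 < z) hyz
  have hexp : 0 < Real.exp y - 1 := sub_pos.2 (Real.one_lt_exp_iff.2 hy)
  rw [periodicPoissonKernel_zero_left hy.ne', periodicPoissonKernel_zero_left hz.ne']
  gcongr

theorem contDiffAt_log_periodicPoissonKernel {z : ℝ × ℝ} {n : WithTop ℕ∞} (hz : 0 < z.2) :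
    ContDiffAt ℝ n (fun z : ℝ × ℝ => Real.log (periodicPoissonKernel z.1 z.2)) z := by
  have hden := (cosh_sub_cos_pos hz.ne' z.1).ne'
  refine ContDiffAt.log ?_ (periodicPoissonKernel_pos hz _).ne'
  exact (contDiffAt_snd.sinh).div (contDiffAt_snd.cosh.sub contDiffAt_fst.cos) hden

theorem hasDerivAt_log_periodicPoissonKernel {X Y : ℝ → ℝ} {x' y' s : ℝ} (hX : HasDerivAt X x' s)
    (hY : HasDerivAt Y y' s) (hpos : 0 < Y s) :
    HasDerivAt (fun r => Real.log (periodicPoissonKernel (X r) (Y r)))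
      (-periodicConjPoissonKernel (X s) (Y s) * x' +
        (1 - Real.cos (X s) * Real.cosh (Y s)) / (Real.cosh (Y s) - Real.cos (X s)) ^ 2 /
          periodicPoissonKernel (X s) (Y s) * y') s := by
  have hden := (cosh_sub_cos_pos hpos.ne' (X s)).ne'
  have hsinh := (Real.sinh_pos_iff.2 hpos).ne'
  refine ((hY.sinh.fun_div (hY.cosh.fun_sub hX.cos) hden).log
    (periodicPoissonKernel_pos hpos _).ne').congr_deriv ?_
  simp only [periodicPoissonKernel, periodicConjPoissonKernel]
  field_simp
  linear_combination y' * Real.cosh_sq_sub_sinh_sq (Y s)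

end PoissonKernel

section Flow

/-- `X + i Y` solves, on `[a, b]`, the backward radial Loewner equation with weight `ℓ` and a driver
of speed `v`, and `u` solves the equation for the logarithm of the modulus of the spatial
derivative. The equations are required almost everywhere, for absolutely continuous functions. -/
structure IsBackwardRadialLoewnerFlow (ℓ v : ℝ → ℝ) (a b : ℝ) (X Y u : ℝ → ℝ) : Prop where
  absolutelyContinuous_re : AbsolutelyContinuousOnInterval X a b
  absolutelyContinuous_im : AbsolutelyContinuousOnInterval Y a b
  absolutelyContinuous_logDeriv : AbsolutelyContinuousOnInterval u a b
  im_pos : ∀ s ∈ Icc a b, 0 < Y s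
  deriv_re : ∀ᵐ s ∂volume.restrict (Icc a b),
    deriv X s = v s - ℓ s * periodicConjPoissonKernel (X s) (Y s)
  deriv_im : ∀ᵐ s ∂volume.restrict (Icc a b), deriv Y s = ℓ s * periodicPoissonKernel (X s) (Y s)
  deriv_logDeriv : ∀ᵐ s ∂volume.restrict (Icc a b),
    deriv u s = ℓ s * ((1 - Real.cos (X s) * Real.cosh (Y s)) /
      (Real.cosh (Y s) - Real.cos (X s)) ^ 2)

theorem mul_sub_mul_sq_le {ℓ : ℝ} (hℓ : 0 < ℓ) (q v : ℝ) :
    q * v - ℓ * q ^ 2 ≤ 1 / 4 * (v ^ 2 / ℓ) := by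
  have hsq : 1 / 4 * (v ^ 2 / ℓ) - (q * v - ℓ * q ^ 2) = (v - 2 * ℓ * q) ^ 2 / (4 * ℓ) := by
    field_simp
    ring
  exact sub_nonneg.1 (hsq ▸ by positivity)

namespace IsBackwardRadialLoewnerFlow

variable {ℓ v X Y u : ℝ → ℝ} {a b : ℝ}

theorem im_le_im (h : IsBackwardRadialLoewnerFlow ℓ v a b X Y u) (hab : a ≤ b)
    (hℓ : ∀ s ∈ Icc a b, 0 ≤ ℓ s) : Y a ≤ Y b := by
  rw [← sub_nonneg, ← h.absolutelyContinuous_im.integral_deriv_eq_sub]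
  refine intervalIntegral.integral_nonneg_of_ae_restrict hab ?_
  filter_upwards [h.deriv_im, ae_restrict_mem measurableSet_Icc] with s hderiv hs
  exact hderiv ▸ mul_nonneg (hℓ s hs) (periodicPoissonKernel_pos (h.im_pos s hs) _).le

theorem absolutelyContinuous_sub_log (h : IsBackwardRadialLoewnerFlow ℓ v a b X Y u)
    (hab : a ≤ b) : AbsolutelyContinuousOnInterval
      (fun s => u s - Real.log (periodicPoissonKernel (X s) (Y s))) a b := by
  have hlog := absolutelyContinuousOnInterval_comp_of_contDiffAt
    (g := fun z : ℝ × ℝ => Real.log (periodicPoissonKernel z.1 z.2))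
    (fun s hs => contDiffAt_log_periodicPoissonKernel (h.im_pos s (uIcc_of_le hab ▸ hs)))
    (absolutelyContinuousOnInterval_prodMk h.absolutelyContinuous_re h.absolutelyContinuous_im)
  exact h.absolutelyContinuous_logDeriv.fun_sub hlog

theorem ae_deriv_sub_log (h : IsBackwardRadialLoewnerFlow ℓ v a b X Y u) (hab : a ≤ b) :
    ∀ᵐ s ∂volume.restrict (Icc a b),
      deriv (fun r => u r - Real.log (periodicPoissonKernel (X r) (Y r))) s =
        periodicConjPoissonKernel (X s) (Y s) * v s -
          ℓ s * periodicConjPoissonKernel (X s) (Y s) ^ 2 := by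
  filter_upwards [h.deriv_re, h.deriv_im, h.deriv_logDeriv, ae_restrict_mem measurableSet_Icc,
    ae_restrict_differentiableAt_of_absolutelyContinuousOnInterval hab h.absolutelyContinuous_re,
    ae_restrict_differentiableAt_of_absolutelyContinuousOnInterval hab h.absolutelyContinuous_im,
    ae_restrict_differentiableAt_of_absolutelyContinuousOnInterval hab
      h.absolutelyContinuous_logDeriv] with s hX' hY' hu' hs hX hY hu
  have hP := (periodicPoissonKernel_pos (h.im_pos s hs) (X s)).ne'
  rw [(hu.hasDerivAt.fun_sub (hasDerivAt_log_periodicPoissonKernel hX.hasDerivAt hY.hasDerivAt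
    (h.im_pos s hs))).deriv, hX', hY', hu', mul_left_comm, div_mul_cancel₀ _ hP]
  ring

theorem sub_log_le_add_integral (h : IsBackwardRadialLoewnerFlow ℓ v a b X Y u) (hab : a ≤ b)
    (hℓ : ∀ s ∈ Icc a b, 0 < ℓ s)
    (hint : IntervalIntegrable (fun s => v s ^ 2 / ℓ s) volume a b) :
    u b - Real.log (periodicPoissonKernel (X b) (Y b)) ≤
      u a - Real.log (periodicPoissonKernel (X a) (Y a)) +
        1 / 4 * ∫ s in a..b, v s ^ 2 / ℓ s := by
  have hac := h.absolutelyContinuous_sub_log hab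
  rw [← sub_le_iff_le_add', ← hac.integral_deriv_eq_sub, ← intervalIntegral.integral_const_mul]
  refine intervalIntegral.integral_mono_ae_restrict hab hac.intervalIntegrable_deriv
    (hint.const_mul _) ?_
  filter_upwards [h.ae_deriv_sub_log hab, ae_restrict_mem measurableSet_Icc] with s hderiv hs
  exact hderiv ▸ mul_sub_mul_sq_le (hℓ s hs) _ _

theorem le_add_integral (h : IsBackwardRadialLoewnerFlow ℓ v a b X Y u) (hab : a ≤ b)
    (hXa : X a = 0) (hℓ : ∀ s ∈ Icc a b, 0 < ℓ s)
    (hint : IntervalIntegrable (fun s => v s ^ 2 / ℓ s) volume a b) :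
    u b ≤ u a + 1 / 4 * ∫ s in a..b, v s ^ 2 / ℓ s := by
  have hYa := h.im_pos a (left_mem_Icc.2 hab)
  have hYb := h.im_pos b (right_mem_Icc.2 hab)
  have hkernel : periodicPoissonKernel (X b) (Y b) ≤ periodicPoissonKernel (X a) (Y a) :=
    calc periodicPoissonKernel (X b) (Y b) ≤ periodicPoissonKernel 0 (Y b) :=
          periodicPoissonKernel_le_zero_left hYb _
      _ ≤ periodicPoissonKernel 0 (Y a) :=
          antitoneOn_periodicPoissonKernel_zero_left hYa hYb
            (h.im_le_im hab fun s hs => (hℓ s hs).le)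
      _ = periodicPoissonKernel (X a) (Y a) := by rw [hXa]
  linarith [h.sub_log_le_add_integral hab hℓ hint,
    Real.log_le_log (periodicPoissonKernel_pos hYb _) hkernel]

theorem le_add_integral_of_reversed {w : ℝ → ℝ} {t : ℝ}
    (h : IsBackwardRadialLoewnerFlow (fun s => w (t - s)) (fun s => v (t - s)) 0 t X Y u)
    (h0t : 0 ≤ t) (hX0 : X 0 = 0) (hw : ∀ s ∈ Icc 0 t, 0 < w s)
    (hint : IntervalIntegrable (fun s => v s ^ 2 / w s) volume 0 t) :
    u t ≤ u 0 + 1 / 4 * ∫ s in (0 : ℝ)..t, v s ^ 2 / w s := by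
  have hu := h.le_add_integral h0t hX0
    (fun s hs => hw _ ⟨sub_nonneg.2 hs.2, sub_le_self t hs.1⟩)
    (by simpa only [sub_self, sub_zero] using (hint.comp_sub_left t).symm)
  rwa [intervalIntegral.integral_comp_sub_left (fun s => v s ^ 2 / w s) t, sub_self,
    sub_zero] at hu

end IsBackwardRadialLoewnerFlow

end Flow

/-- Derivative estimate for the weighted radial Loewner flow with a
finite-energy driver (`n = 1`): if `X + iY` solves the backward radial Loewner flow
started at `θ_t + iy` and `u_s = log |f_s'(θ_t + iy)|` solves the associated derivative
ODE, then `u_t ≤ (1/4)∫₀ᵗ (dθ_s/ds)²/λ_s ds ≤ (1/2) L E_T(θ)` whenever `L` bounds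
`1/λ` on `[0,T]`. -/
theorem radial_loewner_derivative_estimate
    (T : ℝ) (hT : 0 < T)
    (lam : ℝ → ℝ) (hmeas : Measurable lam)
    (hlam : ∀ s ∈ Icc (0 : ℝ) T, 0 < lam s)
    (L : ℝ) (hL : ∀ s ∈ Icc (0 : ℝ) T, 1 / lam s ≤ L)
    (θ : ℝ → ℝ) (hAC : AbsCont1 T θ) (hE : dEnergy1 T θ ≠ ⊤)
    (t : ℝ) (ht : t ∈ Icc (0 : ℝ) T) (y : ℝ) (hy : 0 < y)
    (X Y u : ℝ → ℝ)
    (hX0 : X 0 = 0) (hY0 : Y 0 = y) (hu0 : u 0 = 0)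
    (hYpos : ∀ s ∈ Icc (0 : ℝ) t, 0 < Y s)
    (hXac : AbsCont1 t X) (hYac : AbsCont1 t Y) (huac : AbsCont1 t u)
    (hXde : ∀ᵐ s ∂(volume.restrict (Icc (0 : ℝ) t)),
      deriv X s = deriv (fun r => θ t - θ (t - r)) s -
        lam (t - s) * Real.sin (X s) / (Real.cosh (Y s) - Real.cos (X s)))
    (hYde : ∀ᵐ s ∂(volume.restrict (Icc (0 : ℝ) t)),
      deriv Y s = lam (t - s) * Real.sinh (Y s) / (Real.cosh (Y s) - Real.cos (X s)))
    (hude : ∀ᵐ s ∂(volume.restrict (Icc (0 : ℝ) t)),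
      deriv u s = lam (t - s) * (1 - Real.cos (X s) * Real.cosh (Y s)) /
        (Real.cosh (Y s) - Real.cos (X s)) ^ 2) :
    u t ≤ (1 / 4) * ∫ s in (0 : ℝ)..t, deriv θ s ^ 2 / lam s ∧
    (1 / 4) * (∫ s in (0 : ℝ)..t, deriv θ s ^ 2 / lam s) ≤
      (1 / 2) * L * (dEnergy1 T θ).toReal := by
  have h0t : 0 ≤ t := ht.1
  have hsub : Icc 0 t ⊆ Icc 0 T := Icc_subset_Icc_right ht.2
  have hlam0 : ∀ᵐ s ∂volume.restrict (Ioc 0 t), 0 < lam s :=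
    ae_restrict_of_forall_mem measurableSet_Ioc fun s hs => hlam s (hsub (Ioc_subset_Icc_self hs))
  have hlamL : ∀ᵐ s ∂volume.restrict (Ioc 0 t), 1 / lam s ≤ L :=
    ae_restrict_of_forall_mem measurableSet_Ioc fun s hs => hL s (hsub (Ioc_subset_Icc_self hs))
  have hL0 : 0 ≤ L := (one_div_pos.2 (hlam t ht)).le.trans (hL t ht)
  have hint : IntervalIntegrable (fun s => deriv θ s ^ 2 / lam s) volume 0 t :=
    (intervalIntegrable_iff_integrableOn_Ioc_of_le h0t).2 <| integrable_div_of_one_div_le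
      ((integrableOn_deriv_sq_of_dEnergy1_ne_top hE).mono_set (Ioc_subset_Ioc_right ht.2))
      hmeas.aemeasurable hlam0 hlamL
  have hflow : IsBackwardRadialLoewnerFlow (fun s => lam (t - s)) (fun s => deriv θ (t - s))
      0 t X Y u :=
    ⟨hXac.absolutelyContinuousOnInterval h0t, hYac.absolutelyContinuousOnInterval h0t,
      huac.absolutelyContinuousOnInterval h0t, hYpos,
      by simpa only [deriv_const_sub, deriv_comp_const_sub, neg_neg, mul_div_assoc,
        periodicConjPoissonKernel] using hXde,
      by simpa only [mul_div_assoc, periodicPoissonKernel] using hYde,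
      by simpa only [mul_div_assoc] using hude⟩
  have hu := hflow.le_add_integral_of_reversed h0t hX0 (fun s hs => hlam s (hsub hs)) hint
  rw [hu0, zero_add] at hu
  exact ⟨hu, by linarith [integral_deriv_sq_div_le_dEnergy1 h0t ht.2 hE hL0 hlam0 hlamL]⟩

end
end
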